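/- arXiv:1911.05624 — 2 statements merged into one kernel-verified Lean document; each statement's English description precedes it below -/
import Mathlib

section
/- Let p* ∈ (0, 1), L > 0, δ_MAX > 0, t_1 > 0, 0 < V_MIN ≤ L(1 − p*)/(p*·δ_MAX), and let k_0 be a positive integer. Let (Δ_i) be a sequence of positive reals with Δ_i ≤ Δ_MAX for some constant Δ_MAX and Δ_i = L/V_MIN for all i ≥ k_0, and let (δ_j) be a sequence of reals with 0 < δ_j ≤ δ_MAX for all j. Define p_k = (Σ_{i=1}^k Δ_i)/(t_1 + Σ_{i=1}^k (Δ_i + δ_i)). Then liminf_{k→∞} p_k ≥ p*. -/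
open Filter

/-- If the crossing times `Δ_i` are positive, bounded by `Δ_MAX`,
and equal to `L/V_MIN` from index `k₀` onward, with `0 < V_MIN ≤ L(1−p*)/(p*·δ_MAX)`
and gaps `0 < δ_j ≤ δ_MAX`, then the coverage ratios
`p_k = (Σ_{i<k} Δ_i)/(t₁ + Σ_{i<k} (Δ_i + δ_i))` satisfy `liminf p_k ≥ p*`. -/
theorem liminf_coverage_ge_of_eventually_min_speed
    (pstar L δMAX t1 VMIN ΔMAX : ℝ) (k0 : ℕ)
    (hp : pstar ∈ Set.Ioo (0 : ℝ) 1) (hL : 0 < L) (hδMAX : 0 < δMAX)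
    (ht1 : 0 < t1) (hVpos : 0 < VMIN) (hk0 : 0 < k0)
    (hV : VMIN ≤ L * (1 - pstar) / (pstar * δMAX))
    (Δ : ℕ → ℝ) (hΔpos : ∀ i, 0 < Δ i) (hΔle : ∀ i, Δ i ≤ ΔMAX)
    (hΔeq : ∀ i, k0 ≤ i → Δ i = L / VMIN)
    (δ : ℕ → ℝ) (hδpos : ∀ j, 0 < δ j) (hδ : ∀ j, δ j ≤ δMAX) :
    liminf
        (fun k : ℕ =>
          (∑ i ∈ Finset.range k, Δ i) /
            (t1 + ∑ i ∈ Finset.range k, (Δ i + δ i)))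
        atTop ≥ pstar := by
  obtain ⟨hp0, hp1⟩ := hp
  set S : ℕ → ℝ := fun k => ∑ i ∈ Finset.range k, Δ i with hS
  set D : ℕ → ℝ := fun k => t1 + ∑ i ∈ Finset.range k, (Δ i + δ i) with hD
  have hDpos : ∀ k, 0 < D k := fun k =>
    add_pos_of_pos_of_nonneg ht1
      (Finset.sum_nonneg fun i _ => (add_pos (hΔpos i) (hδpos i)).le)
  have hSD : ∀ k, S k ≤ D k := by
    intro k
    have h : S k ≤ ∑ i ∈ Finset.range k, (Δ i + δ i) :=
      Finset.sum_le_sum fun i _ => by linarith [hδpos i]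
    simp only [hD]
    linarith
  have hSs : ∀ k, S (k + 1) = S k + Δ k := fun k => Finset.sum_range_succ _ _
  have hDs : ∀ k, D (k + 1) = D k + (Δ k + δ k) := fun k => by
    simp only [hD, Finset.sum_range_succ]; ring
  have hc : 0 < L / VMIN := div_pos hL hVpos
  have hkey : pstar * δMAX ≤ (1 - pstar) * (L / VMIN) := by
    rw [le_div_iff₀ (by positivity)] at hV
    rw [← mul_div_assoc, le_div_iff₀ hVpos]
    linarith
  have hlow : ∀ n, S k0 - pstar * D k0 ≤ S (k0 + n) - pstar * D (k0 + n) ∧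
      n * (L / VMIN) ≤ D (k0 + n) := by
    intro n
    induction n with
    | zero => exact ⟨le_rfl, by simpa using (hDpos k0).le⟩
    | succ n ih =>
      obtain ⟨h1, h2⟩ := ih
      have e := hΔeq (k0 + n) (by omega)
      have hm := mul_le_mul_of_nonneg_left (hδ (k0 + n)) hp0.le
      rw [← add_assoc, hSs, hDs, e]
      refine ⟨by linarith, ?_⟩
      push_cast
      linarith [hδpos (k0 + n)]
  refine le_of_forall_lt_imp_le_of_dense fun b hb => ?_
  refine le_liminf_of_le ?_ ?_
  · refine IsBoundedUnder.isCoboundedUnder_ge ⟨1, ?_⟩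
    exact eventually_map.2 (Eventually.of_forall fun k => (div_le_one (hDpos k)).2 (hSD k))
  · obtain ⟨N, hN⟩ := exists_nat_gt ((-(S k0 - pstar * D k0)) / ((pstar - b) * (L / VMIN)))
    have hpb : 0 < pstar - b := sub_pos.2 hb
    rw [div_lt_iff₀ (by positivity)] at hN
    filter_upwards [eventually_ge_atTop (k0 + N)] with k hk
    obtain ⟨n, rfl⟩ := Nat.exists_eq_add_of_le (show k0 ≤ k by omega)
    obtain ⟨h1, h2⟩ := hlow n
    have hn : (N : ℝ) ≤ n := by exact_mod_cast (show N ≤ n by omega)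
    have h3 : (N : ℝ) * (L / VMIN) ≤ D (k0 + n) :=
      (mul_le_mul_of_nonneg_right hn hc.le).trans h2
    have h4 := mul_le_mul_of_nonneg_left h3 hpb.le
    change b ≤ S (k0 + n) / D (k0 + n)
    rw [le_div_iff₀ (hDpos _)]
    nlinarith
end

section
/- Let p* ∈ (0, 1), t_1 > 0, 0 < Δ_MIN ≤ Δ_MAX, and let (δ_j) be a sequence with 0 < δ_MIN ≤ δ_j ≤ δ_MAX < ∞ for all j. Assume Δ_MAX/(Δ_MAX + δ_MAX) ≥ p* and Δ_MIN/(Δ_MIN + δ_MIN) ≤ p*. Define the crossing times recursively (the min-max algorithm): Δ_1 = Δ_MAX, and for k ≥ 2, Δ_k = Δ_MAX if p(t_{2k−1}) ≤ p* and Δ_k = Δ_MIN otherwise, where p(t_{2k+1}) = (Σ_{i=1}^k Δ_i)/(t_1 + Σ_{i=1}^k (Δ_i + δ_i)) and p(t_{2k}) = (Σ_{i=1}^k Δ_i)/(t_1 + Σ_{i=1}^k Δ_i + Σ_{j=1}^{k−1} δ_j). Then lim_{j→∞} p(t_j) = p*. -/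
open Filter

/-- Under the min-max algorithm (`Δ₁ = Δ_MAX`; `Δ_k = Δ_MAX` if the
coverage ratio `p(t_{2k−1}) ≤ p*` and `Δ_k = Δ_MIN` otherwise), with bounded gaps
and the speed conditions `Δ_MAX/(Δ_MAX + δ_MAX) ≥ p*` and
`Δ_MIN/(Δ_MIN + δ_MIN) ≤ p*`, the coverage ratios converge: `p(t_j) → p*`. -/
theorem minmax_coverage_tendsto
    (pstar t1 ΔMIN ΔMAX δMIN δMAX : ℝ)
    (hp : pstar ∈ Set.Ioo (0 : ℝ) 1) (ht1 : 0 < t1)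
    (hΔMIN : 0 < ΔMIN) (hΔle : ΔMIN ≤ ΔMAX)
    (hδMIN : 0 < δMIN) (hδle : δMIN ≤ δMAX)
    (δ : ℕ → ℝ) (hδ : ∀ j, δMIN ≤ δ j ∧ δ j ≤ δMAX)
    (hmax : ΔMAX / (ΔMAX + δMAX) ≥ pstar)
    (hmin : ΔMIN / (ΔMIN + δMIN) ≤ pstar)
    (Δ p : ℕ → ℝ)
    (hΔ1 : Δ 1 = ΔMAX)
    (hΔk : ∀ k, 2 ≤ k →
      Δ k = if p (2 * k - 1) ≤ pstar then ΔMAX else ΔMIN)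
    (hp_even : ∀ k, 1 ≤ k →
      p (2 * k) = (∑ i ∈ Finset.Icc 1 k, Δ i) /
        (t1 + ∑ i ∈ Finset.Icc 1 k, Δ i + ∑ j ∈ Finset.Icc 1 (k - 1), δ j))
    (hp_odd : ∀ k, 1 ≤ k →
      p (2 * k + 1) = (∑ i ∈ Finset.Icc 1 k, Δ i) /
        (t1 + ∑ i ∈ Finset.Icc 1 k, (Δ i + δ i))) :
    Tendsto p atTop (nhds pstar) := by
  obtain ⟨hp0, hp1⟩ := hp
  have hmax' : pstar * (ΔMAX + δMAX) ≤ ΔMAX := by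
    rwa [ge_iff_le, le_div_iff₀ (by linarith)] at hmax
  have hmin' : ΔMIN ≤ pstar * (ΔMIN + δMIN) := by
    rwa [div_le_iff₀ (by linarith)] at hmin
  have hΔb : ∀ k, 1 ≤ k → ΔMIN ≤ Δ k := by
    intro k hk
    rcases Nat.lt_or_ge k 2 with h | h
    · have : k = 1 := by omega
      rw [this, hΔ1]; exact hΔle
    · rw [hΔk k h]; split_ifs <;> linarith
  obtain ⟨S, hS⟩ : ∃ S : ℕ → ℝ, ∀ k, S k = ∑ i ∈ Finset.Icc 1 k, Δ i := ⟨_, fun _ => rfl⟩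
  obtain ⟨G, hG⟩ : ∃ G : ℕ → ℝ, ∀ k, G k = ∑ i ∈ Finset.Icc 1 k, δ i := ⟨_, fun _ => rfl⟩
  have hS0 : S 0 = 0 := by simp [hS]
  have hG0 : G 0 = 0 := by simp [hG]
  have hSs : ∀ k, S (k + 1) = S k + Δ (k + 1) := by
    intro k; rw [hS, hS, Finset.sum_Icc_succ_top (by omega)]
  have hGs : ∀ k, G (k + 1) = G k + δ (k + 1) := by
    intro k; rw [hG, hG, Finset.sum_Icc_succ_top (by omega)]
  have hSb : ∀ k : ℕ, k * ΔMIN ≤ S k := by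
    intro k
    induction k with
    | zero => simp [hS0]
    | succ k ih => rw [hSs]; push_cast; linarith [hΔb (k + 1) (by omega)]
  have hGb : ∀ k : ℕ, 0 ≤ G k := by
    intro k
    induction k with
    | zero => simp [hG0]
    | succ k ih => rw [hGs]; linarith [(hδ (k + 1)).1]
  have hodd : ∀ k, 1 ≤ k → p (2 * k + 1) = S k / (t1 + S k + G k) := by
    intro k hk
    rw [hp_odd k hk, Finset.sum_add_distrib, ← hS, ← hG, add_assoc]
  have heven : ∀ k, p (2 * (k + 1)) = S (k + 1) / (t1 + S (k + 1) + G k) := by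
    intro k
    rw [hp_even (k + 1) (by omega), hS, hG]; rfl
  have hδMAX : 0 < δMAX := by linarith
  have hpd : ∀ j, 0 ≤ pstar * δ j ∧ pstar * δMIN ≤ pstar * δ j ∧
      pstar * δ j ≤ pstar * δMAX ∧ pstar * δMAX ≤ δMAX := by
    intro j
    obtain ⟨h1, h2⟩ := hδ j
    refine ⟨by apply mul_nonneg <;> linarith, by gcongr, by gcongr, by nlinarith⟩
  have hpM : 0 ≤ pstar * ΔMAX := by apply mul_nonneg <;> linarith
  have hpm : 0 ≤ pstar * ΔMIN := by positivity
  have hpm' : pstar * ΔMIN ≤ ΔMIN := by nlinarith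
  have hpt : 0 ≤ pstar * t1 ∧ pstar * t1 ≤ t1 := ⟨by positivity, by nlinarith⟩
  have hE : ∀ k, |S (k + 1) - pstar * (t1 + S (k + 1) + G (k + 1))| ≤ t1 + ΔMAX + δMAX := by
    intro k
    induction k with
    | zero =>
      rw [hSs, hGs, hS0, hG0]
      simp only [zero_add, hΔ1]
      obtain ⟨a, b, c, d⟩ := hpd 1
      rw [abs_le]
      constructor <;> nlinarith
    | succ k ih =>
      rw [hSs (k + 1), hGs (k + 1)]
      have hT : 0 < t1 + S (k + 1) + G (k + 1) := by
        have h1 := hSb (k + 1)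
        have h2 := hGb (k + 1)
        have : 0 ≤ ((k + 1 : ℕ) : ℝ) * ΔMIN := by positivity
        linarith
      have hd := hΔk (k + 1 + 1) (by omega)
      rw [show 2 * (k + 1 + 1) - 1 = 2 * (k + 1) + 1 by omega, hodd (k + 1) (by omega)] at hd
      obtain ⟨a, b, c, d⟩ := hpd (k + 1 + 1)
      rw [abs_le] at ih ⊢
      obtain ⟨i1, i2⟩ := ih
      split_ifs at hd with h <;> rw [div_le_iff₀ hT] at h
      · rw [hd]; constructor <;> linarith
      · rw [hd]; constructor <;> linarith
  have key : ∀ (k : ℕ) (s T C : ℝ), (k + 1 : ℕ) * ΔMIN ≤ T → |s - pstar * T| ≤ C →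
      |s / T - pstar| ≤ C / ((k + 1 : ℕ) * ΔMIN) := by
    intro k s T C h1 h2
    have h0 : 0 < ((k + 1 : ℕ) : ℝ) * ΔMIN := by positivity
    have hT : 0 < T := by linarith
    have : s / T - pstar = (s - pstar * T) / T := by field_simp
    rw [this, abs_div, abs_of_pos hT]
    have hC : 0 ≤ C := (abs_nonneg _).trans h2
    gcongr
  set C : ℝ := t1 + ΔMAX + δMAX + δMAX with hC
  have hbound : ∀ k n : ℕ, n = 2 * (k + 1) ∨ n = 2 * (k + 1) + 1 →
      |p n - pstar| ≤ C / ((k + 1 : ℕ) * ΔMIN) := by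
    intro k n hn
    have h1 := hSb (k + 1)
    have h2 := hGb (k + 1)
    have h3 := hGb k
    have h4 := hE k
    obtain ⟨a, b, c, d⟩ := hpd (k + 1)
    rcases hn with rfl | rfl
    · rw [heven]
      apply key
      · linarith
      · rw [hGs] at h4
        rw [abs_le] at h4 ⊢
        constructor <;> linarith [h4.1, h4.2]
    · rw [hodd _ (by omega)]
      apply key
      · linarith
      · linarith
  have hCpos : 0 < C := by linarith
  rw [tendsto_iff_norm_sub_tendsto_zero]
  refine squeeze_zero' (g := fun n : ℕ => (3 * C / ΔMIN) / (n : ℝ))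
    (Eventually.of_forall fun _ => norm_nonneg _) ?_ (tendsto_const_div_atTop_nhds_zero_nat _)
  filter_upwards [eventually_ge_atTop 2] with n hn
  obtain ⟨k, hk⟩ : ∃ k, n = 2 * (k + 1) ∨ n = 2 * (k + 1) + 1 := ⟨n / 2 - 1, by omega⟩
  refine (hbound k n hk).trans ?_
  have h3 : (n : ℝ) ≤ 3 * (k + 1 : ℕ) := by
    have : n ≤ 3 * (k + 1) := by omega
    exact_mod_cast this
  have hn0 : (0 : ℝ) < n := by
    have : 0 < n := by omega
    exact_mod_cast this
  rw [div_div, div_le_div_iff₀ (by positivity) (by positivity)]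
  have := mul_le_mul_of_nonneg_left h3 (mul_pos hCpos hΔMIN).le
  linarith
end
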